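/- Consider the (α,β,γ)-metric F(x,y) = α·e^{β/α} + γ on U × (ℝⁿ∖{0}). Assume √(b²(x)) < 1 and √(g²(x)) < e^{−1} for all x ∈ U (so F > 0 and F is a Finsler metric), and assume that the 1-form β is nowhere zero on U (i.e. (b_i(x)) ≠ 0 for every x). If F is projectively flat on U, i.e. (∂²F/∂x^k∂y^j)·y^k − ∂F/∂x^j = 0 on U × (ℝⁿ∖{0}) for every j, then β is parallel with respect to α, i.e. b_{i|j} = 0 on U for all i,j, and γ is closed, i.e. ^γs_{ij} = 0 on U for all i,j (equivalently ∂γ_i/∂x^j = ∂γ_j/∂x^i). -/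

import Mathlib

noncomputable section

open Set

/-- `a^{ij} u_i v_j` : the pairing of two covectors via the inverse matrix. -/
def quadInv {n : ℕ} (a : Matrix (Fin n) (Fin n) ℝ) (u v : Fin n → ℝ) : ℝ :=
  ∑ i, ∑ j, a⁻¹ i j * u i * v j

/-- `α(y) = √(a_{ij} y^i y^j)`. -/
def alph {n : ℕ} (a : Matrix (Fin n) (Fin n) ℝ) (y : Fin n → ℝ) : ℝ :=
  Real.sqrt (∑ i, ∑ j, a i j * y i * y j)

/-- `v_i y^i`. -/
def oneForm {n : ℕ} (v y : Fin n → ℝ) : ℝ := ∑ i, v i * y i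

/-- `s(y) = v_i y^i / α(y)`. -/
def sVar {n : ℕ} (a : Matrix (Fin n) (Fin n) ℝ) (v y : Fin n → ℝ) : ℝ :=
  oneForm v y / alph a y

/-- The (α,β,γ)-metric `F(y) = α·Ψ(s, s̄)`. -/
def Fm {n : ℕ} (a : Matrix (Fin n) (Fin n) ℝ) (bv gv : Fin n → ℝ)
    (Ψ : ℝ → ℝ → ℝ) (y : Fin n → ℝ) : ℝ :=
  alph a y * Ψ (sVar a bv y) (sVar a gv y)

/-- Partial derivative of a function on `ℝⁿ` in the `i`-th coordinate direction. -/
def pd {n : ℕ} (f : (Fin n → ℝ) → ℝ) (y : Fin n → ℝ) (i : Fin n) : ℝ :=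
  fderiv ℝ f y (Pi.single i 1)

/-- Second partial derivative. -/
def pd2 {n : ℕ} (f : (Fin n → ℝ) → ℝ) (y : Fin n → ℝ) (i j : Fin n) : ℝ :=
  pd (fun z => pd f z j) y i

/-- Partial derivative with respect to the first slot (`∂/∂s`). -/
def Ds (Ψ : ℝ → ℝ → ℝ) : ℝ → ℝ → ℝ := fun p q => deriv (fun u => Ψ u q) p

/-- Partial derivative with respect to the second slot (`∂/∂s̄`). -/
def Dt (Ψ : ℝ → ℝ → ℝ) : ℝ → ℝ → ℝ := fun p q => deriv (fun v => Ψ p v) q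

/-- `h_i = v_i − s·α_i`. -/
def hl {n : ℕ} (a : Matrix (Fin n) (Fin n) ℝ) (v y : Fin n → ℝ) (i : Fin n) : ℝ :=
  v i - sVar a v y * pd (alph a) y i

/-- Fundamental tensor `g_{ij} = ½ ∂²(F²)/∂yⁱ∂yʲ`. -/
def fundT {n : ℕ} (F : (Fin n → ℝ) → ℝ) (y : Fin n → ℝ) (i j : Fin n) : ℝ :=
  (1 / 2) * pd2 (fun z => F z ^ 2) y i j

/-- `Π = Ψ − sΨ_s − s̄Ψ_s̄`. -/
def PiF (Ψ : ℝ → ℝ → ℝ) (p q : ℝ) : ℝ := Ψ p q - p * Ds Ψ p q - q * Dt Ψ p q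

/-- `J = (Ψ_ss Ψ_s̄s̄ − Ψ_ss̄²)/Π`. -/
def JF (Ψ : ℝ → ℝ → ℝ) (p q : ℝ) : ℝ :=
  (Ds (Ds Ψ) p q * Dt (Dt Ψ) p q - Dt (Ds Ψ) p q ^ 2) / PiF Ψ p q

/-- `Γ`, with `B = b²`, `G = g²`, `Θ = θ` as real parameters. -/
def GammaF (Ψ : ℝ → ℝ → ℝ) (B G Θ p q : ℝ) : ℝ :=
  PiF Ψ p q + (B - p ^ 2) * Ds (Ds Ψ) p q + (G - q ^ 2) * Dt (Dt Ψ) p q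
    + 2 * (Θ - p * q) * Dt (Ds Ψ) p q
    + ((B - p ^ 2) * (G - q ^ 2) - (Θ - p * q) ^ 2) * JF Ψ p q

/-- `ρ = Ψ(Ψ − sΨ_s − s̄Ψ_s̄)`. -/
def rhoF (Ψ : ℝ → ℝ → ℝ) : ℝ → ℝ → ℝ := fun p q => Ψ p q * PiF Ψ p q

/-- `ρ₀ = ΨΨ_ss + Ψ_s²`. -/
def rho0F (Ψ : ℝ → ℝ → ℝ) : ℝ → ℝ → ℝ := fun p q => Ψ p q * Ds (Ds Ψ) p q + Ds Ψ p q ^ 2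

/-- `ρ̄₀ = ΨΨ_s̄s̄ + Ψ_s̄²`. -/
def rhobar0F (Ψ : ℝ → ℝ → ℝ) : ℝ → ℝ → ℝ := fun p q => Ψ p q * Dt (Dt Ψ) p q + Dt Ψ p q ^ 2

/-- `ρ₃ = ΨΨ_ss̄ + Ψ_sΨ_s̄`. -/
def rho3F (Ψ : ℝ → ℝ → ℝ) : ℝ → ℝ → ℝ :=
  fun p q => Ψ p q * Dt (Ds Ψ) p q + Ds Ψ p q * Dt Ψ p q

/-- `ρ₁ = ΨΨ_s − sρ₀ − s̄ρ₃`. -/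
def rho1F (Ψ : ℝ → ℝ → ℝ) : ℝ → ℝ → ℝ :=
  fun p q => Ψ p q * Ds Ψ p q - p * rho0F Ψ p q - q * rho3F Ψ p q

/-- `ρ̄₁ = ΨΨ_s̄ − s̄ρ̄₀ − sρ₃`. -/
def rhobar1F (Ψ : ℝ → ℝ → ℝ) : ℝ → ℝ → ℝ :=
  fun p q => Ψ p q * Dt Ψ p q - q * rhobar0F Ψ p q - p * rho3F Ψ p q

/-- `ρ₂ = −sρ₁ − s̄ρ̄₁`. -/
def rho2F (Ψ : ℝ → ℝ → ℝ) : ℝ → ℝ → ℝ :=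
  fun p q => -p * rho1F Ψ p q - q * rhobar1F Ψ p q

/-- `π₁ = Ψ_s̄Ψ_ss̄ − Ψ_sΨ_s̄s̄ + sΨJ`. -/
def pi1F (Ψ : ℝ → ℝ → ℝ) (p q : ℝ) : ℝ :=
  Dt Ψ p q * Dt (Ds Ψ) p q - Ds Ψ p q * Dt (Dt Ψ) p q + p * Ψ p q * JF Ψ p q

/-- `π₂ = Ψ_sΨ_ss̄ − Ψ_s̄Ψ_ss + s̄ΨJ`. -/
def pi2F (Ψ : ℝ → ℝ → ℝ) (p q : ℝ) : ℝ :=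
  Ds Ψ p q * Dt (Ds Ψ) p q - Dt Ψ p q * Ds (Ds Ψ) p q + q * Ψ p q * JF Ψ p q


/-- Christoffel symbols `Γ^k_{ij}` of the Riemannian metric `a_{ij}(x)`. -/
def chr {n : ℕ} (a : (Fin n → ℝ) → Matrix (Fin n) (Fin n) ℝ) (x : Fin n → ℝ)
    (k i j : Fin n) : ℝ :=
  (1 / 2) * ∑ l, (a x)⁻¹ k l *
    (pd (fun z => a z j l) x i + pd (fun z => a z i l) x j - pd (fun z => a z i j) x l)

/-- Geodesic coefficients `^αG^i = ½ Γ^i_{jk} y^j y^k` of `α`. -/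
def alphaG {n : ℕ} (a : (Fin n → ℝ) → Matrix (Fin n) (Fin n) ℝ) (x y : Fin n → ℝ)
    (i : Fin n) : ℝ :=
  (1 / 2) * ∑ j, ∑ k, chr a x i j k * y j * y k

/-- Covariant derivative `v_{i|j}` of a 1-form `v` with respect to `α`. -/
def covD {n : ℕ} (a : (Fin n → ℝ) → Matrix (Fin n) (Fin n) ℝ)
    (v : (Fin n → ℝ) → Fin n → ℝ) (x : Fin n → ℝ) (i j : Fin n) : ℝ :=
  pd (fun z => v z i) x j - ∑ k, v x k * chr a x k i j

/-- `r_{ij} = ½(v_{i|j} + v_{j|i})`. -/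
def rSym {n : ℕ} (a : (Fin n → ℝ) → Matrix (Fin n) (Fin n) ℝ)
    (v : (Fin n → ℝ) → Fin n → ℝ) (x : Fin n → ℝ) (i j : Fin n) : ℝ :=
  (1 / 2) * (covD a v x i j + covD a v x j i)

/-- `s_{ij} = ½(v_{i|j} − v_{j|i})`. -/
def sSym {n : ℕ} (a : (Fin n → ℝ) → Matrix (Fin n) (Fin n) ℝ)
    (v : (Fin n → ℝ) → Fin n → ℝ) (x : Fin n → ℝ) (i j : Fin n) : ℝ :=
  (1 / 2) * (covD a v x i j - covD a v x j i)

/-- `r_{00} = r_{ij} y^i y^j`. -/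
def r00 {n : ℕ} (a : (Fin n → ℝ) → Matrix (Fin n) (Fin n) ℝ)
    (v : (Fin n → ℝ) → Fin n → ℝ) (x y : Fin n → ℝ) : ℝ :=
  ∑ i, ∑ j, rSym a v x i j * y i * y j

/-- `s_{j0} = s_{jk} y^k`. -/
def s0low {n : ℕ} (a : (Fin n → ℝ) → Matrix (Fin n) (Fin n) ℝ)
    (v : (Fin n → ℝ) → Fin n → ℝ) (x y : Fin n → ℝ) (j : Fin n) : ℝ :=
  ∑ k, sSym a v x j k * y k

/-- `s^i_0 = a^{ij} s_{j0}`. -/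
def sUp0 {n : ℕ} (a : (Fin n → ℝ) → Matrix (Fin n) (Fin n) ℝ)
    (v : (Fin n → ℝ) → Fin n → ℝ) (x y : Fin n → ℝ) (i : Fin n) : ℝ :=
  ∑ j, (a x)⁻¹ i j * s0low a v x y j

/-- Contraction `w_i · (s of v)^i_0`. -/
def contrS {n : ℕ} (a : (Fin n → ℝ) → Matrix (Fin n) (Fin n) ℝ)
    (v w : (Fin n → ℝ) → Fin n → ℝ) (x y : Fin n → ℝ) : ℝ :=
  ∑ i, w x i * sUp0 a v x y i

/-- Fundamental tensor of `F(x,·)` as a matrix. -/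
def gmatF {n : ℕ} (F : (Fin n → ℝ) → (Fin n → ℝ) → ℝ) (x y : Fin n → ℝ) :
    Matrix (Fin n) (Fin n) ℝ :=
  Matrix.of fun i j => fundT (F x) y i j

/-- Spray coefficients `G^i = ¼ g^{il}(∂g_{jl}/∂x^k + ∂g_{lk}/∂x^j − ∂g_{jk}/∂x^l) y^j y^k`. -/
def sprayF {n : ℕ} (F : (Fin n → ℝ) → (Fin n → ℝ) → ℝ) (x y : Fin n → ℝ) (i : Fin n) : ℝ :=
  (1 / 4) * ∑ l, (gmatF F x y)⁻¹ i l *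
    ∑ j, ∑ k, (pd (fun z => gmatF F z y j l) x k
        + pd (fun z => gmatF F z y l k) x j
        - pd (fun z => gmatF F z y j k) x l) * y j * y k

/-!
Put `s = β / α`. Hamel's equation reads `e^s (X + Y) + T = 0`, where `X` is even in `y` while `Y`
and `T` are odd, and `T` is the exterior derivative of `γ` contracted with `y`. Replacing `y` by
`-y` separates it into `X = T sinh s` and `Y = -T cosh s`.

In the second equation `α⁴ Y` is a polynomial in `y`, hence so is `T α⁴ cosh (β / α)`. On a line
along which `β` is a nonzero constant `c`, `α⁴ cosh (c / α)` differs from its Taylor polynomial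
`α⁴ + c² α² / 2 + c⁴ / 24` by a positive function of order `α⁻²`, and `T` has degree at most one.
The polynomial `T (α⁴ cosh (c / α) - α⁴ - c² α² / 2 - c⁴ / 24)` therefore tends to zero, so it
vanishes, and with it `T`: the form `γ` is closed.

What remains, `X = 0` and `Y = 0`, is polynomial in `y` up to powers of `α`. Write `R = (b_{i|j})`,
`S = R - Rᵀ` and let `u` be the vector dual to `β` with respect to `α`. Eliminating the contribution
of the geodesics of `α` leaves
`(β ⟨y, R y⟩ + α² ⟨u, S y⟩) (α² b - β a y) + α⁴ S y = 0`.
Taking `y = u`, then `y` in the kernel of `β`, gives `S = 0`; taking `y = u + v` with `v` in the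
kernel of `β` then gives `⟨y, R y⟩ = 0`, so `R = 0`.
-/

/-! ### Linear algebra -/

section
open Matrix

theorem isSymm_of_posDef {ι : Type*} {a : Matrix ι ι ℝ} (ha : a.PosDef) : a.IsSymm :=
  isHermitian_iff_isSymm.1 ha.isHermitian

variable {ι : Type*} [Fintype ι]

theorem dotProduct_mulVec_self_pos {a : Matrix ι ι ℝ} (ha : a.PosDef) {y : ι → ℝ} (hy : y ≠ 0) :
    0 < y ⬝ᵥ a *ᵥ y := by
  simpa using ha.dotProduct_mulVec_pos hy

theorem dotProduct_pos_of_mulVec_eq {a : Matrix ι ι ℝ} (ha : a.PosDef) {b u : ι → ℝ}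
    (hb : b ≠ 0) (hu : a *ᵥ u = b) : 0 < b ⬝ᵥ u := by
  have hu0 : u ≠ 0 := by
    rintro rfl
    exact hb (by rw [← hu, mulVec_zero])
  simpa only [hu, dotProduct_comm u b] using dotProduct_mulVec_self_pos ha hu0

theorem dotProduct_mulVec_comm_of_isSymm {K : Type*} [CommSemiring K] {a : Matrix ι ι K}
    (ha : a.IsSymm) (y z : ι → K) : y ⬝ᵥ a *ᵥ z = z ⬝ᵥ a *ᵥ y := by
  rw [← dotProduct_transpose_mulVec, ha.eq]

theorem exists_eq_smul_add_of_dotProduct_ne_zero {K : Type*} [Field K] {b u : ι → K}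
    (hbu : b ⬝ᵥ u ≠ 0) (y : ι → K) : ∃ (c : K) (v : ι → K), b ⬝ᵥ v = 0 ∧ y = c • u + v := by
  refine ⟨b ⬝ᵥ y / b ⬝ᵥ u, y - (b ⬝ᵥ y / b ⬝ᵥ u) • u, ?_, (add_sub_cancel _ _).symm⟩
  rw [dotProduct_sub, dotProduct_smul, smul_eq_mul, div_mul_cancel₀ _ hbu, sub_self]

theorem eq_zero_of_smul_add_sq_smul_mulVec_eq_zero {a S : Matrix ι ι ℝ} (ha : a.PosDef)
    {b u : ι → ℝ} (hb : b ≠ 0) (hu : a *ᵥ u = b) (r : (ι → ℝ) → ℝ)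
    (h : ∀ y ≠ 0, (b ⬝ᵥ y * r y + (y ⬝ᵥ a *ᵥ y) * (u ⬝ᵥ S *ᵥ y)) •
      ((y ⬝ᵥ a *ᵥ y) • b - (b ⬝ᵥ y) • a *ᵥ y) + (y ⬝ᵥ a *ᵥ y) ^ 2 • S *ᵥ y = 0) :
    S = 0 := by
  classical
  have hbu := dotProduct_pos_of_mulVec_eq ha hb hu
  have hSu : S *ᵥ u = 0 := by
    have hu0 : u ≠ 0 := fun h0 ↦ hbu.ne' (by rw [h0, dotProduct_zero])
    simpa [hu, dotProduct_comm u b, hbu.ne'] using h u hu0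
  have hSker : ∀ v, b ⬝ᵥ v = 0 → S *ᵥ v = 0 := fun v hv ↦ by
    rcases eq_or_ne v 0 with rfl | hv0
    · exact mulVec_zero S
    have hSv : S *ᵥ v = -(u ⬝ᵥ S *ᵥ v) • b := by
      have hv' : (v ⬝ᵥ a *ᵥ v) ^ 2 • (S *ᵥ v + (u ⬝ᵥ S *ᵥ v) • b) = 0 := by
        rw [← h v hv0, hv]
        module
      rw [neg_smul]
      exact eq_neg_of_add_eq_zero_left ((smul_eq_zero.1 hv').resolve_left
        (pow_ne_zero 2 (dotProduct_mulVec_self_pos ha hv0).ne'))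
    have hσ : u ⬝ᵥ S *ᵥ v * (1 + b ⬝ᵥ u) = 0 := by
      have := congrArg (u ⬝ᵥ ·) hSv
      simp only [dotProduct_smul, smul_eq_mul, dotProduct_comm u b] at this
      linear_combination this
    rw [hSv, (mul_eq_zero.1 hσ).resolve_right (by positivity), neg_zero, zero_smul]
  refine ext_of_mulVec_single fun i ↦ ?_
  obtain ⟨c, v, hv, hi⟩ := exists_eq_smul_add_of_dotProduct_ne_zero hbu.ne' (Pi.single i 1)
  rw [hi, mulVec_add, mulVec_smul, hSu, hSker v hv, smul_zero, add_zero, zero_mulVec]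

theorem dotProduct_mulVec_self_eq_zero_of_forall_add {K : Type*} [Field K] [CharZero K]
    [Nontrivial ι] {R : Matrix ι ι K} {b u : ι → K} (hbu : b ⬝ᵥ u ≠ 0)
    (h : ∀ v ≠ 0, b ⬝ᵥ v = 0 → (u + v) ⬝ᵥ R *ᵥ (u + v) = 0) (y : ι → K) :
    y ⬝ᵥ R *ᵥ y = 0 := by
  have hcoeff : ∀ v ≠ 0, b ⬝ᵥ v = 0 →
      u ⬝ᵥ R *ᵥ u = 0 ∧ u ⬝ᵥ R *ᵥ v + v ⬝ᵥ R *ᵥ u = 0 ∧ v ⬝ᵥ R *ᵥ v = 0 := fun v hv0 hv ↦ by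
    have h₁ := h v hv0 hv
    have h₂ := h (-v) (neg_ne_zero.2 hv0) (by rw [dotProduct_neg, hv, neg_zero])
    have h₃ := h ((2 : K) • v) (smul_ne_zero two_ne_zero hv0)
      (by rw [dotProduct_smul, hv, smul_zero])
    simp only [mulVec_add, mulVec_neg, mulVec_smul, add_dotProduct, neg_dotProduct, smul_dotProduct,
      dotProduct_add, dotProduct_neg, dotProduct_smul, smul_eq_mul] at h₁ h₂ h₃
    refine ⟨?_, ?_, ?_⟩
    · linear_combination h₁ + h₂ / 3 - h₃ / 3
    · linear_combination h₁ / 2 - h₂ / 2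
    · linear_combination - h₁ / 2 + h₂ / 6 + h₃ / 3
  have hRu : u ⬝ᵥ R *ᵥ u = 0 := by
    obtain ⟨v, hv0, hv⟩ := exists_ne_zero_dotProduct_eq_zero b
    exact (hcoeff v hv0 (by rw [dotProduct_comm, hv])).1
  obtain ⟨c, v, hv, rfl⟩ := exists_eq_smul_add_of_dotProduct_ne_zero hbu y
  rcases eq_or_ne v 0 with rfl | hv0
  · simp [mulVec_smul, hRu]
  · obtain ⟨-, hcross, hRv⟩ := hcoeff v hv0 hv
    simp only [mulVec_add, mulVec_smul, add_dotProduct, smul_dotProduct, dotProduct_add,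
      dotProduct_smul, smul_eq_mul]
    linear_combination c ^ 2 * hRu + c * hcross + hRv

theorem dotProduct_mulVec_self_eq_zero_of_mul_smul_eq_zero [Nontrivial ι] {a R : Matrix ι ι ℝ}
    (ha : a.PosDef) {b u : ι → ℝ} (hb : b ≠ 0) (hu : a *ᵥ u = b)
    (h : ∀ y ≠ 0, (b ⬝ᵥ y * (y ⬝ᵥ R *ᵥ y)) •
      ((y ⬝ᵥ a *ᵥ y) • b - (b ⬝ᵥ y) • a *ᵥ y) = 0) (y : ι → ℝ) :
    y ⬝ᵥ R *ᵥ y = 0 := by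
  have hbu := dotProduct_pos_of_mulVec_eq ha hb hu
  refine dotProduct_mulVec_self_eq_zero_of_forall_add hbu.ne' (fun v hv0 hv ↦ ?_) y
  have hbuv : b ⬝ᵥ (u + v) = b ⬝ᵥ u := by rw [dotProduct_add, hv, add_zero]
  have hne : u + v ≠ 0 := fun h0 ↦ hbu.ne' (by rw [← hbuv, h0, dotProduct_zero])
  have huv : u ⬝ᵥ a *ᵥ v = 0 := by
    rw [dotProduct_mulVec_comm_of_isSymm (isSymm_of_posDef ha), hu, dotProduct_comm, hv]
  have hpos := dotProduct_mulVec_self_pos ha hv0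
  have hmul : (u + v) ⬝ᵥ R *ᵥ (u + v) * ((b ⬝ᵥ u) ^ 2 * v ⬝ᵥ a *ᵥ v) = 0 := by
    have hcontr := congrArg (u ⬝ᵥ ·) (h _ hne)
    simp only [hbuv, mulVec_add a, hu, add_dotProduct u v, dotProduct_add, dotProduct_smul,
      dotProduct_sub, smul_eq_mul, huv, dotProduct_comm _ b, hv, dotProduct_zero] at hcontr ⊢
    linear_combination hcontr
  exact (mul_eq_zero.1 hmul).resolve_right (by positivity)

theorem eq_zero_of_isSymm_of_dotProduct_mulVec_self {K : Type*} [Field K] [CharZero K]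
    {R : Matrix ι ι K} (hR : R.IsSymm) (h : ∀ y, y ⬝ᵥ R *ᵥ y = 0) : R = 0 := by
  classical
  ext i j
  have hij := h (Pi.single i 1 + Pi.single j 1)
  have hi := h (Pi.single i 1)
  have hj := h (Pi.single j 1)
  have hsymm := hR.apply i j
  simp only [mulVec_add, mulVec_single_one, dotProduct_add, add_dotProduct, single_dotProduct,
    one_mul, col_apply] at hij hi hj
  rw [Matrix.zero_apply]
  linear_combination (hij - hi - hj - hsymm) / 2

theorem eq_zero_of_smul_add_sq_smul_skew_eq_zero [Nontrivial ι] {a R : Matrix ι ι ℝ}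
    (ha : a.PosDef) {b u : ι → ℝ} (hb : b ≠ 0) (hu : a *ᵥ u = b)
    (h : ∀ y ≠ 0, (b ⬝ᵥ y * (y ⬝ᵥ R *ᵥ y) + (y ⬝ᵥ a *ᵥ y) * (u ⬝ᵥ (R - Rᵀ) *ᵥ y)) •
      ((y ⬝ᵥ a *ᵥ y) • b - (b ⬝ᵥ y) • a *ᵥ y) + (y ⬝ᵥ a *ᵥ y) ^ 2 • (R - Rᵀ) *ᵥ y = 0) :
    R = 0 := by
  have hskew : R - Rᵀ = 0 := eq_zero_of_smul_add_sq_smul_mulVec_eq_zero ha hb hu _ h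
  simp only [hskew, zero_mulVec, dotProduct_zero, mul_zero, smul_zero, add_zero] at h
  exact eq_zero_of_isSymm_of_dotProduct_mulVec_self (sub_eq_zero.1 hskew).symm
    (dotProduct_mulVec_self_eq_zero_of_mul_smul_eq_zero ha hb hu h)

theorem smul_add_sq_smul_eq_zero_of_smul_eq {K : Type*} [Field K] {A B r : K}
    {u h ξ σ : ι → K} (hA : A ≠ 0) (heven : (A * r + u ⬝ᵥ ξ) • h + A • ξ = 0)
    (hodd : B • ξ = A ^ 2 • σ) : (B * r + A * (u ⬝ᵥ σ)) • h + A ^ 2 • σ = 0 := by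
  have hcontr : B * (u ⬝ᵥ ξ) = A ^ 2 * (u ⬝ᵥ σ) := by
    simpa only [dotProduct_smul, smul_eq_mul] using congrArg (u ⬝ᵥ ·) hodd
  have hmul : A • ((B * r + A * (u ⬝ᵥ σ)) • h + A ^ 2 • σ) = 0 := by
    calc A • ((B * r + A * (u ⬝ᵥ σ)) • h + A ^ 2 • σ)
        = (A * B * r + A ^ 2 * (u ⬝ᵥ σ)) • h + A • A ^ 2 • σ := by module
      _ = B • ((A * r + u ⬝ᵥ ξ) • h + A • ξ) := by rw [← hcontr, ← hodd]; module
      _ = 0 := by rw [heven, smul_zero]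
  exact (smul_eq_zero.1 hmul).resolve_left hA
end

/-! ### Polynomials and the hyperbolic cosine -/

section
open Matrix Filter Topology Polynomial

theorem taylor_four_lt_cosh {s : ℝ} (hs : s ≠ 0) :
    1 + s ^ 2 / 2 + s ^ 4 / 24 < Real.cosh s := by
  have h := sum_le_hasSum (Finset.range 4)
    (fun i _ ↦ by rw [pow_mul]; positivity) (Real.hasSum_cosh s)
  have h6 : 0 < s ^ 6 := by positivity
  norm_num [Finset.sum_range_succ, Nat.factorial] at h
  linarith

theorem cosh_le_taylor_four_add {s : ℝ} (hs : |s| ≤ 1) :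
    Real.cosh s ≤ 1 + s ^ 2 / 2 + s ^ 4 / 24 + s ^ 6 := by
  have hpos := (abs_le.1 (Real.exp_bound hs (n := 6) (by norm_num))).2
  have hneg := (abs_le.1 (Real.exp_bound (x := -s) (by simpa using hs) (n := 6) (by norm_num))).2
  have h6 : |s| ^ 6 = s ^ 6 := Even.pow_abs (by decide) s
  have : 0 ≤ s ^ 6 := by positivity
  rw [abs_neg] at hneg
  norm_num [Finset.sum_range_succ, Nat.factorial, h6] at hpos hneg
  rw [Real.cosh_eq]
  linarith

theorem lt_sq_mul_cosh_div_sqrt {c x : ℝ} (hc : c ≠ 0) (hx : 0 < x) :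
    x ^ 2 + c ^ 2 / 2 * x + c ^ 4 / 24 < x ^ 2 * Real.cosh (c / √x) := by
  obtain ⟨r, hr, rfl⟩ : ∃ r, 0 < r ∧ x = r ^ 2 :=
    ⟨√x, Real.sqrt_pos.2 hx, (Real.sq_sqrt hx.le).symm⟩
  rw [Real.sqrt_sq hr.le]
  calc (r ^ 2) ^ 2 + c ^ 2 / 2 * r ^ 2 + c ^ 4 / 24
      = (r ^ 2) ^ 2 * (1 + (c / r) ^ 2 / 2 + (c / r) ^ 4 / 24) := by field_simp
    _ < (r ^ 2) ^ 2 * Real.cosh (c / r) := by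
      gcongr
      exact taylor_four_lt_cosh (div_ne_zero hc hr.ne')

theorem sq_mul_cosh_div_sqrt_le {c x : ℝ} (hx : 0 < x) (hcx : c ^ 2 ≤ x) :
    x ^ 2 * Real.cosh (c / √x) ≤ x ^ 2 + c ^ 2 / 2 * x + c ^ 4 / 24 + c ^ 6 / x := by
  obtain ⟨r, hr, rfl⟩ : ∃ r, 0 < r ∧ x = r ^ 2 :=
    ⟨√x, Real.sqrt_pos.2 hx, (Real.sq_sqrt hx.le).symm⟩
  rw [Real.sqrt_sq hr.le]
  have hcr : |c / r| ≤ 1 := by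
    rw [← sq_le_one_iff_abs_le_one, div_pow]
    exact div_le_one_of_le₀ hcx hx.le
  calc (r ^ 2) ^ 2 * Real.cosh (c / r)
      ≤ (r ^ 2) ^ 2 * (1 + (c / r) ^ 2 / 2 + (c / r) ^ 4 / 24 + (c / r) ^ 6) := by
        gcongr
        exact cosh_le_taylor_four_add hcr
    _ = (r ^ 2) ^ 2 + c ^ 2 / 2 * r ^ 2 + c ^ 4 / 24 + c ^ 6 / r ^ 2 := by field_simp

theorem eq_zero_of_mul_cosh_div_sqrt_eq_eval {T A P : ℝ[X]} {c : ℝ} (hc : c ≠ 0)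
    (hA : ∀ t, 0 < A.eval t) (hTA : T.degree < A.degree)
    (h : ∀ t, T.eval t * (A.eval t ^ 2 * Real.cosh (c / √(A.eval t))) = P.eval t) : T = 0 := by
  by_contra hT
  set Q : ℝ[X] := P - T * (A ^ 2 + C (c ^ 2 / 2) * A + C (c ^ 4 / 24)) with hQ
  set E : ℝ → ℝ := fun t ↦ A.eval t ^ 2 * Real.cosh (c / √(A.eval t)) -
    (A.eval t ^ 2 + c ^ 2 / 2 * A.eval t + c ^ 4 / 24) with hE
  have hQE : ∀ t, Q.eval t = T.eval t * E t := fun t ↦ by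
    simp only [hQ, hE, eval_sub, eval_mul, eval_add, eval_pow, eval_C, ← h t]
    ring
  have hEpos : ∀ t, 0 < E t := fun t ↦ sub_pos.2 (lt_sq_mul_cosh_div_sqrt hc (hA t))
  have hcA : ∀ᶠ t in atTop, c ^ 2 / A.eval t ≤ 1 := by
    have hlim := div_tendsto_atTop_zero_of_degree_lt (C (c ^ 2)) A
      (degree_C_le.trans_lt ((zero_le_degree_iff.2 hT).trans_lt hTA))
    simpa only [eval_C] using hlim.eventually_le_const zero_lt_one
  have hElim : ∀ᶠ t in atTop, ‖Q.eval t‖ ≤ c ^ 6 * |T.eval t / A.eval t| := by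
    filter_upwards [hcA] with t ht
    have hEle : E t ≤ c ^ 6 / A.eval t :=
      sub_le_iff_le_add'.2 (sq_mul_cosh_div_sqrt_le (hA t) ((div_le_one (hA t)).1 ht))
    calc ‖Q.eval t‖ = |T.eval t| * E t := by
          rw [hQE, norm_mul, Real.norm_eq_abs, Real.norm_of_nonneg (hEpos t).le]
      _ ≤ |T.eval t| * (c ^ 6 / A.eval t) := by gcongr
      _ = c ^ 6 * |T.eval t / A.eval t| := by rw [abs_div, abs_of_pos (hA t)]; ring
  have hQ0 : Q = 0 := by
    have hTA0 := (div_tendsto_atTop_zero_of_degree_lt T A hTA).abs.const_mul (c ^ 6)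
    rw [abs_zero, mul_zero] at hTA0
    simpa using ((Polynomial.tendsto_nhds_iff Q).1 (squeeze_zero_norm' hElim hTA0)).1
  refine hT (Polynomial.funext fun t ↦ ?_)
  have := hQE t
  simpa [hQ0, (hEpos t).ne'] using this

theorem eval_aeval_C_add_X_mul_C {ι R : Type*} [CommSemiring R] (P : MvPolynomial ι R)
    (u v : ι → R) (t : R) :
    (MvPolynomial.aeval (fun i ↦ C (u i) + X * C (v i)) P).eval t
      = MvPolynomial.eval (u + t • v) P := by
  induction P using MvPolynomial.induction_on with
  | C c => simp
  | add p q hp hq => simp only [map_add, eval_add, hp, hq]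
  | mul_X p i hp =>
    simp only [map_mul, eval_mul, hp, MvPolynomial.aeval_X, MvPolynomial.eval_X, eval_add, eval_C,
      eval_X, Pi.add_apply, Pi.smul_apply, smul_eq_mul]

variable {ι : Type*} [Fintype ι]

theorem eval_C_comp_dotProduct_X {R : Type*} [CommSemiring R] (w y : ι → R) :
    MvPolynomial.eval y ((MvPolynomial.C ∘ w) ⬝ᵥ MvPolynomial.X) = w ⬝ᵥ y := by
  simp [dotProduct]

theorem eval_X_dotProduct_map_C_mulVec_X {R : Type*} [CommSemiring R] (M : Matrix ι ι R)
    (y : ι → R) :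
    MvPolynomial.eval y (MvPolynomial.X ⬝ᵥ M.map MvPolynomial.C *ᵥ MvPolynomial.X)
      = y ⬝ᵥ M *ᵥ y := by
  simp [dotProduct, mulVec]

theorem eq_zero_of_dotProduct_mul_cosh_eq_eval [Nontrivial ι] {a : Matrix ι ι ℝ} (ha : a.PosDef)
    {b τ : ι → ℝ} (hb : b ≠ 0) (P : MvPolynomial ι ℝ)
    (h : ∀ y ≠ 0, τ ⬝ᵥ y * ((y ⬝ᵥ a *ᵥ y) ^ 2 * Real.cosh (b ⬝ᵥ y / √(y ⬝ᵥ a *ᵥ y)))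
      = MvPolynomial.eval y P) :
    τ = 0 := by
  obtain ⟨v, hv, hvb⟩ := exists_ne_zero_dotProduct_eq_zero b
  have hoff : ∀ u, b ⬝ᵥ u ≠ 0 → τ ⬝ᵥ u = 0 := fun u hu ↦ by
    have hline : ∀ t : ℝ, b ⬝ᵥ (u + t • v) = b ⬝ᵥ u := fun t ↦ by
      rw [dotProduct_add, dotProduct_smul, dotProduct_comm b v, hvb, smul_zero, add_zero]
    have hne : ∀ t : ℝ, u + t • v ≠ 0 := fun t h0 ↦ hu (by rw [← hline t, h0, dotProduct_zero])
    set T : ℝ[X] := C (τ ⬝ᵥ v) * X + C (τ ⬝ᵥ u)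
    set A : ℝ[X] := C (v ⬝ᵥ a *ᵥ v) * X ^ 2 + C (u ⬝ᵥ a *ᵥ v + v ⬝ᵥ a *ᵥ u) * X + C (u ⬝ᵥ a *ᵥ u)
    have hT : ∀ t, T.eval t = τ ⬝ᵥ (u + t • v) := fun t ↦ by
      simp only [T, eval_add, eval_mul, eval_C, eval_X, dotProduct_add, dotProduct_smul,
        smul_eq_mul]
      ring
    have hA : ∀ t, A.eval t = (u + t • v) ⬝ᵥ a *ᵥ (u + t • v) := fun t ↦ by
      simp only [A, map_add, eval_add, eval_mul, eval_C, eval_pow, eval_X, mulVec_add, mulVec_smul,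
        dotProduct_add, add_dotProduct, smul_dotProduct, smul_eq_mul, dotProduct_smul]
      ring
    have hdegA : A.degree = 2 := degree_quadratic (dotProduct_mulVec_self_pos ha hv).ne'
    have hT0 : T = 0 := by
      refine eq_zero_of_mul_cosh_div_sqrt_eq_eval (A := A)
        (P := MvPolynomial.aeval (fun i ↦ C (u i) + X * C (v i)) P) hu
        (fun t ↦ (hA t).symm ▸ dotProduct_mulVec_self_pos ha (hne t))
        (hdegA ▸ degree_linear_le.trans_lt (by norm_num)) fun t ↦ ?_
      rw [hT, hA, ← hline t, h _ (hne t), eval_aeval_C_add_X_mul_C]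
    simpa [hT0] using (hT 0).symm
  refine dotProduct_eq_zero τ fun y ↦ ?_
  have hbb : b ⬝ᵥ b ≠ 0 := dotProduct_self_eq_zero.not.2 hb
  by_cases hy : b ⬝ᵥ y = 0
  · have := hoff (y + b) (by rwa [dotProduct_add, hy, zero_add])
    rwa [dotProduct_add, hoff b hbb, add_zero] at this
  · exact hoff y hy
end

/-! ### Hamel's operator -/

section
open Matrix Filter Topology

section
variable {E : Type*} [NormedAddCommGroup E] [NormedSpace ℝ E] {x : E}

theorem hasFDerivAt_div {f g : E → ℝ} {f' g' : E →L[ℝ] ℝ} (hf : HasFDerivAt f f' x)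
    (hg : HasFDerivAt g g' x) (h0 : g x ≠ 0) :
    HasFDerivAt (fun w ↦ f w / g w) ((g x)⁻¹ • (f' - (f x / g x) • g')) x := by
  simp only [div_eq_mul_inv]
  refine (hf.fun_mul ((hasDerivAt_inv h0).comp_hasFDerivAt x hg)).congr_fderiv ?_
  ext v
  simp only [neg_smul, smul_neg, Function.comp_apply, _root_.add_apply, _root_.neg_apply,
    _root_.smul_apply, smul_eq_mul, _root_.sub_apply]
  ring

theorem hasFDerivAt_mul_exp_div_add {α β γ : E → ℝ} {α' β' γ' : E →L[ℝ] ℝ}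
    (hα : HasFDerivAt α α' x) (hβ : HasFDerivAt β β' x) (hγ : HasFDerivAt γ γ' x) (h0 : α x ≠ 0) :
    HasFDerivAt (fun w ↦ α w * Real.exp (β w / α w) + γ w)
      (Real.exp (β x / α x) • ((1 - β x / α x) • α' + β') + γ') x := by
  refine ((hα.fun_mul (hasFDerivAt_div hβ hα h0).exp).fun_add hγ).congr_fderiv ?_
  ext v
  simp only [_root_.add_apply, _root_.smul_apply, _root_.sub_apply, smul_eq_mul, smul_add,
    add_left_inj]
  field_simp
  ring

theorem hasFDerivAt_exp_div_mul_add {α β l m c : E → ℝ} {α' β' l' m' c' : E →L[ℝ] ℝ}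
    (hα : HasFDerivAt α α' x) (hβ : HasFDerivAt β β' x) (hl : HasFDerivAt l l' x)
    (hm : HasFDerivAt m m' x) (hc : HasFDerivAt c c' x) (h0 : α x ≠ 0) :
    HasFDerivAt (fun w ↦ Real.exp (β w / α w) * ((1 - β w / α w) * l w + m w) + c w)
      (Real.exp (β x / α x) •
        (((m x - β x / α x * l x) / α x) • (β' - (β x / α x) • α')
          + (1 - β x / α x) • l' + m') + c') x := by
  have hs := hasFDerivAt_div hβ hα h0
  refine ((hs.exp.fun_mul (((hs.const_sub 1).fun_mul hl).fun_add hm)).fun_add hc).congr_fderiv ?_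
  ext v
  simp only [smul_neg, smul_add, _root_.add_apply, _root_.smul_apply, smul_eq_mul,
    _root_.neg_apply, _root_.sub_apply, add_left_inj]
  field_simp
  ring
end

section
variable {n : ℕ}

theorem sum_pd_mul (f : (Fin n → ℝ) → ℝ) (x v : Fin n → ℝ) :
    ∑ k, pd f x k * v k = fderiv ℝ f x v := by
  simp only [pd, mul_comm _ (v _), ← smul_eq_mul, ← map_smul, ← map_sum]
  rw [← pi_eq_sum_univ' v]

/-- Hamel's operator `(∂²F/∂x^k∂y^j) y^k − ∂F/∂x^j`, which vanishes identically exactly when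
straight lines are geodesics of `F`. The `y`-derivative is taken first. -/
def hamel (F : (Fin n → ℝ) → (Fin n → ℝ) → ℝ) (x y : Fin n → ℝ) (j : Fin n) : ℝ :=
  ∑ k, pd (fun z ↦ pd (F z) y j) x k * y k - pd (fun z ↦ F z y) x j

/-- The differentiability of `F` at `(x, y)` under which Hamel's operator can be computed by the
chain rule. `vertical` is required near `x` because its derivative is differentiated in `x`. -/
structure HamelDifferentiableAt (F : (Fin n → ℝ) → (Fin n → ℝ) → ℝ) (x y : Fin n → ℝ) :
    Prop where
  vertical : ∀ᶠ z in 𝓝 x, DifferentiableAt ℝ (F z) y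
  horizontal : DifferentiableAt ℝ (fun z ↦ F z y) x
  mixed : ∀ j, DifferentiableAt ℝ (fun z ↦ pd (F z) y j) x

theorem hamel_mul_exp_div_add {α β γ : (Fin n → ℝ) → (Fin n → ℝ) → ℝ} {x y : Fin n → ℝ}
    (hα : HamelDifferentiableAt α x y) (hβ : HamelDifferentiableAt β x y)
    (hγ : HamelDifferentiableAt γ x y) (h0 : α x y ≠ 0) (j : Fin n) :
    hamel (fun z w ↦ α z w * Real.exp (β z w / α z w) + γ z w) x y j =
      Real.exp (β x y / α x y) *
        ((fderiv ℝ (fun z ↦ β z y) x y - β x y / α x y * fderiv ℝ (fun z ↦ α z y) x y) / α x y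
            * (pd (β x) y j - β x y / α x y * pd (α x) y j)
          + (1 - β x y / α x y) * hamel α x y j + hamel β x y j)
        + hamel γ x y j := by
  have hpd : (fun z ↦ pd (fun w ↦ α z w * Real.exp (β z w / α z w) + γ z w) y j) =ᶠ[𝓝 x]
      fun z ↦ Real.exp (β z y / α z y) *
        ((1 - β z y / α z y) * pd (α z) y j + pd (β z) y j) + pd (γ z) y j := by
    filter_upwards [hα.vertical, hβ.vertical, hγ.vertical,
      hα.horizontal.continuousAt.eventually_ne h0] with z hαz hβz hγz h0z
    have hF := hasFDerivAt_mul_exp_div_add hαz.hasFDerivAt hβz.hasFDerivAt hγz.hasFDerivAt h0z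
    simp only [pd, hF.fderiv, smul_add, _root_.add_apply, _root_.smul_apply, smul_eq_mul,
      add_left_inj]
    ring
  have hmixed := hasFDerivAt_exp_div_mul_add hα.horizontal.hasFDerivAt hβ.horizontal.hasFDerivAt
    (hα.mixed j).hasFDerivAt (hβ.mixed j).hasFDerivAt (hγ.mixed j).hasFDerivAt h0
  have hhor := hasFDerivAt_mul_exp_div_add hα.horizontal.hasFDerivAt hβ.horizontal.hasFDerivAt
    hγ.horizontal.hasFDerivAt h0
  simp only [hamel, sum_pd_mul, hpd.fderiv_eq, hmixed.fderiv]
  simp only [pd, hhor.fderiv, _root_.add_apply, _root_.smul_apply, _root_.sub_apply, smul_eq_mul]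
  ring

/-- The matrix `∂v_i/∂x^j` of partial derivatives of a 1-form `v`; its skew part is the exterior
derivative of `v`. -/
def jacobian (v : (Fin n → ℝ) → Fin n → ℝ) (x : Fin n → ℝ) : Matrix (Fin n) (Fin n) ℝ :=
  of fun i j ↦ pd (fun z ↦ v z i) x j

theorem hasFDerivAt_oneForm (v y : Fin n → ℝ) :
    HasFDerivAt (oneForm v) (∑ i, v i • ContinuousLinearMap.proj (R := ℝ) (φ := fun _ ↦ ℝ) i) y :=
  HasFDerivAt.fun_sum fun i _ ↦ (hasFDerivAt_apply i y).const_mul (v i)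

theorem pd_oneForm (v y : Fin n → ℝ) (j : Fin n) : pd (oneForm v) y j = v j := by
  simp [pd, (hasFDerivAt_oneForm v y).fderiv, Pi.single_apply]

variable {v : (Fin n → ℝ) → Fin n → ℝ} {x : Fin n → ℝ}

theorem hasFDerivAt_oneForm_left (hv : ∀ i, DifferentiableAt ℝ (fun z ↦ v z i) x) (y : Fin n → ℝ) :
    HasFDerivAt (fun z ↦ oneForm (v z) y) (∑ i, y i • fderiv ℝ (fun z ↦ v z i) x) x :=
  HasFDerivAt.fun_sum fun i _ ↦ (hv i).hasFDerivAt.mul_const (y i)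

theorem hamelDifferentiableAt_oneForm (hv : ∀ i, DifferentiableAt ℝ (fun z ↦ v z i) x)
    (y : Fin n → ℝ) : HamelDifferentiableAt (fun z ↦ oneForm (v z)) x y where
  vertical := .of_forall fun z ↦ (hasFDerivAt_oneForm (v z) y).differentiableAt
  horizontal := (hasFDerivAt_oneForm_left hv y).differentiableAt
  mixed j := by simpa only [pd_oneForm] using hv j

theorem fderiv_oneForm_left (hv : ∀ i, DifferentiableAt ℝ (fun z ↦ v z i) x) (y w : Fin n → ℝ) :
    fderiv ℝ (fun z ↦ oneForm (v z) y) x w = y ⬝ᵥ jacobian v x *ᵥ w := by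
  simp [(hasFDerivAt_oneForm_left hv y).fderiv, dotProduct, mulVec, jacobian, sum_pd_mul]

theorem hamel_oneForm (hv : ∀ i, DifferentiableAt ℝ (fun z ↦ v z i) x) (y : Fin n → ℝ)
    (j : Fin n) :
    hamel (fun z ↦ oneForm (v z)) x y j = ((jacobian v x - (jacobian v x)ᵀ) *ᵥ y) j := by
  have hhor : pd (fun z ↦ oneForm (v z) y) x j = ((jacobian v x)ᵀ *ᵥ y) j := by
    rw [pd, fderiv_oneForm_left hv, mulVec_single_one]
    simp only [col, mulVec, transpose_apply, dotProduct_comm]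
    rfl
  rw [hamel, hhor, sub_mulVec, Pi.sub_apply]
  simp only [pd_oneForm]
  rfl
end
end

/-! ### Riemannian metrics -/

section
open Matrix Filter Topology
variable {n : ℕ} {a : (Fin n → ℝ) → Matrix (Fin n) (Fin n) ℝ} {x : Fin n → ℝ}

theorem alph_eq_sqrt_dotProduct (M : Matrix (Fin n) (Fin n) ℝ) (y : Fin n → ℝ) :
    alph M y = √(y ⬝ᵥ M *ᵥ y) := by
  simp only [alph, dotProduct, mulVec, Finset.mul_sum]
  exact congrArg _ (Finset.sum_congr rfl fun i _ ↦ Finset.sum_congr rfl fun j _ ↦ by ring)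

theorem alph_sq {M : Matrix (Fin n) (Fin n) ℝ} (hM : M.PosDef) (y : Fin n → ℝ) :
    alph M y ^ 2 = y ⬝ᵥ M *ᵥ y := by
  rw [alph_eq_sqrt_dotProduct, Real.sq_sqrt]
  simpa using hM.posSemidef.dotProduct_mulVec_nonneg y

theorem alph_pos {M : Matrix (Fin n) (Fin n) ℝ} (hM : M.PosDef) {y : Fin n → ℝ} (hy : y ≠ 0) :
    0 < alph M y := by
  rw [alph_eq_sqrt_dotProduct]
  exact Real.sqrt_pos.2 (dotProduct_mulVec_self_pos hM hy)

theorem hasFDerivAt_dotProduct_mulVec_self (M : Matrix (Fin n) (Fin n) ℝ) (y : Fin n → ℝ) :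
    HasFDerivAt (fun w ↦ w ⬝ᵥ M *ᵥ w)
      (∑ i, (y i • ∑ j, M i j • ContinuousLinearMap.proj (R := ℝ) (φ := fun _ ↦ ℝ) j
        + (M *ᵥ y) i • ContinuousLinearMap.proj i)) y :=
  HasFDerivAt.fun_sum fun i _ ↦ (hasFDerivAt_apply i y).fun_mul (hasFDerivAt_oneForm (M i) y)

theorem hasFDerivAt_alph {M : Matrix (Fin n) (Fin n) ℝ} (hM : M.PosDef) {y : Fin n → ℝ}
    (hy : y ≠ 0) :
    HasFDerivAt (alph M) ((2 * alph M y)⁻¹ • fderiv ℝ (fun w ↦ w ⬝ᵥ M *ᵥ w) y) y := by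
  have h := (hasFDerivAt_dotProduct_mulVec_self M y).differentiableAt.hasFDerivAt.sqrt
    (dotProduct_mulVec_self_pos hM hy).ne'
  simpa only [← alph_eq_sqrt_dotProduct, one_div] using h

theorem pd_alph {M : Matrix (Fin n) (Fin n) ℝ} (hM : M.PosDef) {y : Fin n → ℝ} (hy : y ≠ 0)
    (j : Fin n) : pd (alph M) y j = (M *ᵥ y) j / alph M y := by
  have hQ : fderiv ℝ (fun w ↦ w ⬝ᵥ M *ᵥ w) y (Pi.single j 1) = 2 * (M *ᵥ y) j := by
    have hcomm : y ⬝ᵥ M.col j = (M *ᵥ y) j := by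
      rw [← mulVec_single_one, dotProduct_mulVec_comm_of_isSymm (isSymm_of_posDef hM),
        single_one_dotProduct]
    rw [(hasFDerivAt_dotProduct_mulVec_self M y).fderiv, two_mul]
    nth_rw 1 [← hcomm]
    simp [Finset.sum_add_distrib, Pi.single_apply, dotProduct]
  rw [pd, (hasFDerivAt_alph hM hy).fderiv, _root_.smul_apply, hQ, smul_eq_mul, inv_mul_eq_div,
    mul_div_mul_left _ _ two_ne_zero]

/-- The entrywise derivative of the matrix-valued function `a` at `x` in the direction `w`. It is
defined from scalar derivatives since matrices carry no global norm. -/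
def matrixFDeriv (a : (Fin n → ℝ) → Matrix (Fin n) (Fin n) ℝ) (x w : Fin n → ℝ) :
    Matrix (Fin n) (Fin n) ℝ :=
  of fun i j ↦ fderiv ℝ (fun z ↦ a z i j) x w

theorem isSymm_matrixFDeriv (ha : ∀ᶠ z in 𝓝 x, (a z).IsSymm) (w : Fin n → ℝ) :
    (matrixFDeriv a x w).IsSymm := by
  ext i j
  have hij : (fun z ↦ a z j i) =ᶠ[𝓝 x] fun z ↦ a z i j := ha.mono fun z hz ↦ hz.apply i j
  simp [matrixFDeriv, hij.fderiv_eq]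

theorem hasFDerivAt_mulVec_apply (ha : ∀ i j, DifferentiableAt ℝ (fun z ↦ a z i j) x)
    (y : Fin n → ℝ) (i : Fin n) :
    HasFDerivAt (fun z ↦ (a z *ᵥ y) i) (∑ j, y j • fderiv ℝ (fun z ↦ a z i j) x) x :=
  hasFDerivAt_oneForm_left (ha i) y

theorem fderiv_mulVec_apply (ha : ∀ i j, DifferentiableAt ℝ (fun z ↦ a z i j) x)
    (y w : Fin n → ℝ) (i : Fin n) :
    fderiv ℝ (fun z ↦ (a z *ᵥ y) i) x w = (matrixFDeriv a x w *ᵥ y) i := by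
  rw [(hasFDerivAt_mulVec_apply ha y i).fderiv]
  simp [mulVec, dotProduct, matrixFDeriv, mul_comm]

theorem hasFDerivAt_dotProduct_mulVec (ha : ∀ i j, DifferentiableAt ℝ (fun z ↦ a z i j) x)
    (y : Fin n → ℝ) :
    HasFDerivAt (fun z ↦ y ⬝ᵥ a z *ᵥ y) (∑ i, y i • fderiv ℝ (fun z ↦ (a z *ᵥ y) i) x) x :=
  HasFDerivAt.fun_sum fun i _ ↦
    (hasFDerivAt_mulVec_apply ha y i).differentiableAt.hasFDerivAt.const_mul (y i)

theorem fderiv_dotProduct_mulVec (ha : ∀ i j, DifferentiableAt ℝ (fun z ↦ a z i j) x)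
    (y w : Fin n → ℝ) :
    fderiv ℝ (fun z ↦ y ⬝ᵥ a z *ᵥ y) x w = y ⬝ᵥ matrixFDeriv a x w *ᵥ y := by
  rw [(hasFDerivAt_dotProduct_mulVec ha y).fderiv]
  simp [fderiv_mulVec_apply ha, dotProduct]

theorem hasFDerivAt_alph_left (ha : ∀ i j, DifferentiableAt ℝ (fun z ↦ a z i j) x)
    (hpos : (a x).PosDef) {y : Fin n → ℝ} (hy : y ≠ 0) :
    HasFDerivAt (fun z ↦ alph (a z) y)
      ((2 * alph (a x) y)⁻¹ • fderiv ℝ (fun z ↦ y ⬝ᵥ a z *ᵥ y) x) x := by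
  have h := (hasFDerivAt_dotProduct_mulVec ha y).differentiableAt.hasFDerivAt.sqrt
    (dotProduct_mulVec_self_pos hpos hy).ne'
  simpa only [← alph_eq_sqrt_dotProduct, one_div] using h

theorem fderiv_alph_left (ha : ∀ i j, DifferentiableAt ℝ (fun z ↦ a z i j) x)
    (hpos : (a x).PosDef) {y : Fin n → ℝ} (hy : y ≠ 0) (w : Fin n → ℝ) :
    fderiv ℝ (fun z ↦ alph (a z) y) x w = y ⬝ᵥ matrixFDeriv a x w *ᵥ y / (2 * alph (a x) y) := by
  rw [(hasFDerivAt_alph_left ha hpos hy).fderiv, _root_.smul_apply, fderiv_dotProduct_mulVec ha,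
    smul_eq_mul, inv_mul_eq_div]

theorem pd_alph_eventuallyEq (hpos : ∀ᶠ z in 𝓝 x, (a z).PosDef) {y : Fin n → ℝ} (hy : y ≠ 0)
    (j : Fin n) :
    (fun z ↦ pd (alph (a z)) y j) =ᶠ[𝓝 x] fun z ↦ (a z *ᵥ y) j / alph (a z) y :=
  hpos.mono fun _ hz ↦ pd_alph hz hy j

theorem hamelDifferentiableAt_alph (ha : ∀ i j, DifferentiableAt ℝ (fun z ↦ a z i j) x)
    (hpos : ∀ᶠ z in 𝓝 x, (a z).PosDef) {y : Fin n → ℝ} (hy : y ≠ 0) :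
    HamelDifferentiableAt (fun z ↦ alph (a z)) x y where
  vertical := hpos.mono fun z hz ↦ (hasFDerivAt_alph hz hy).differentiableAt
  horizontal := (hasFDerivAt_alph_left ha hpos.self_of_nhds hy).differentiableAt
  mixed j := by
    exact (hasFDerivAt_div (hasFDerivAt_mulVec_apply ha y j)
      (hasFDerivAt_alph_left ha hpos.self_of_nhds hy)
      (alph_pos hpos.self_of_nhds hy).ne').differentiableAt.congr_of_eventuallyEq
        (pd_alph_eventuallyEq hpos hy j)

/-- Christoffel symbols of the first kind `Γ_{l,ij}` of `a`, as a matrix in `i, j` for fixed `l`. -/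
def christoffelFirst (a : (Fin n → ℝ) → Matrix (Fin n) (Fin n) ℝ) (x : Fin n → ℝ) (l : Fin n) :
    Matrix (Fin n) (Fin n) ℝ :=
  of fun i j ↦ 1 / 2 *
    (pd (fun z ↦ a z j l) x i + pd (fun z ↦ a z i l) x j - pd (fun z ↦ a z i j) x l)

/-- The lowered geodesic coefficients `Γ_{l,ij} y^i y^j = 2 a_{lk} G^k` of `α`, as a covector in
`l`. -/
def christoffelForm (a : (Fin n → ℝ) → Matrix (Fin n) (Fin n) ℝ) (x y : Fin n → ℝ) :
    Fin n → ℝ :=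
  fun l ↦ y ⬝ᵥ christoffelFirst a x l *ᵥ y

/-- The covector `α² N − (N·y) (a y)`, where `N` is `christoffelForm`. It measures how far
`α` is from being projectively flat (see `hamel_alph`) and is polynomial in `y`. -/
def geodesicDefect (a : (Fin n → ℝ) → Matrix (Fin n) (Fin n) ℝ) (x y : Fin n → ℝ) :
    Fin n → ℝ :=
  (y ⬝ᵥ a x *ᵥ y) • christoffelForm a x y - (y ⬝ᵥ christoffelForm a x y) • a x *ᵥ y

theorem christoffelForm_apply (a : (Fin n → ℝ) → Matrix (Fin n) (Fin n) ℝ) (x y : Fin n → ℝ)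
    (l : Fin n) :
    christoffelForm a x y l =
      (y ᵥ* matrixFDeriv a x y) l - y ⬝ᵥ matrixFDeriv a x (Pi.single l 1) *ᵥ y / 2 := by
  set P : Matrix (Fin n) (Fin n) ℝ := of fun i j ↦ pd (fun z ↦ a z j l) x i with hP
  have hfirst : christoffelFirst a x l
      = (1 / 2 : ℝ) • (P + Pᵀ - matrixFDeriv a x (Pi.single l 1)) := rfl
  have hPy : y ⬝ᵥ P *ᵥ y = (y ᵥ* matrixFDeriv a x y) l := by
    rw [dotProduct_mulVec]
    simp only [hP, matrixFDeriv, ← sum_pd_mul, dotProduct, vecMul, of_apply, mul_comm]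
  rw [christoffelForm, hfirst, smul_mulVec, sub_mulVec, add_mulVec, dotProduct_smul,
    dotProduct_sub, dotProduct_add, dotProduct_transpose_mulVec, hPy, smul_eq_mul]
  ring

theorem dotProduct_christoffelForm_self (ha : ∀ i j, DifferentiableAt ℝ (fun z ↦ a z i j) x)
    (y : Fin n → ℝ) : y ⬝ᵥ christoffelForm a x y = y ⬝ᵥ matrixFDeriv a x y *ᵥ y / 2 := by
  have hsum : ∑ l, y l * (y ⬝ᵥ matrixFDeriv a x (Pi.single l 1) *ᵥ y)
      = y ⬝ᵥ matrixFDeriv a x y *ᵥ y := by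
    simp only [← fderiv_dotProduct_mulVec ha]
    simpa only [pd, mul_comm] using sum_pd_mul (fun z ↦ y ⬝ᵥ a z *ᵥ y) x y
  calc y ⬝ᵥ christoffelForm a x y
      = y ⬝ᵥ (y ᵥ* matrixFDeriv a x y)
        - (∑ l, y l * (y ⬝ᵥ matrixFDeriv a x (Pi.single l 1) *ᵥ y)) / 2 := by
        simp only [dotProduct, christoffelForm_apply, mul_sub, Finset.sum_sub_distrib,
          Finset.sum_div, mul_div_assoc]
    _ = y ⬝ᵥ matrixFDeriv a x y *ᵥ y / 2 := by
        rw [hsum, dotProduct_comm, ← dotProduct_mulVec]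
        ring

theorem hamel_alph (ha : ∀ i j, DifferentiableAt ℝ (fun z ↦ a z i j) x)
    (hpos : ∀ᶠ z in 𝓝 x, (a z).PosDef) {y : Fin n → ℝ} (hy : y ≠ 0) (j : Fin n) :
    hamel (fun z ↦ alph (a z)) x y j = geodesicDefect a x y j / alph (a x) y ^ 3 := by
  have hpx := hpos.self_of_nhds
  have hα := (alph_pos hpx hy).ne'
  have hsymm : (y ᵥ* matrixFDeriv a x y) = matrixFDeriv a x y *ᵥ y := by
    rw [← vecMul_transpose, isSymm_matrixFDeriv (hpos.mono fun _ ↦ isSymm_of_posDef)]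
  have hhor : pd (fun z ↦ alph (a z) y) x j = _ := fderiv_alph_left ha hpx hy (Pi.single j 1)
  rw [hamel, sum_pd_mul, (pd_alph_eventuallyEq hpos hy j).fderiv_eq, (hasFDerivAt_div
    (hasFDerivAt_mulVec_apply ha y j).differentiableAt.hasFDerivAt
    (hasFDerivAt_alph_left ha hpx hy).differentiableAt.hasFDerivAt hα).fderiv, hhor,
    _root_.smul_apply, _root_.sub_apply, _root_.smul_apply, fderiv_mulVec_apply ha,
    fderiv_alph_left ha hpx hy, geodesicDefect, Pi.sub_apply, Pi.smul_apply, Pi.smul_apply,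
    christoffelForm_apply, dotProduct_christoffelForm_self ha, hsymm, ← alph_sq hpx]
  simp only [smul_eq_mul]
  field_simp
  ring
end

/-! ### The metric `α e^{β/α} + γ` -/

section
open Matrix Filter Topology
variable {n : ℕ} {a : (Fin n → ℝ) → Matrix (Fin n) (Fin n) ℝ} {x : Fin n → ℝ}

theorem isSymm_christoffelFirst (ha : ∀ᶠ z in 𝓝 x, (a z).IsSymm) (l : Fin n) :
    (christoffelFirst a x l).IsSymm := by
  ext i j
  have hij : pd (fun z ↦ a z j i) x l = pd (fun z ↦ a z i j) x l :=
    (isSymm_matrixFDeriv ha (Pi.single l 1)).apply i j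
  simp only [christoffelFirst, transpose_apply, of_apply, hij]
  ring

theorem of_covD_eq (a : (Fin n → ℝ) → Matrix (Fin n) (Fin n) ℝ) (v : (Fin n → ℝ) → Fin n → ℝ)
    (x : Fin n → ℝ) :
    of (covD a v x) = jacobian v x - ∑ l, (v x ᵥ* (a x)⁻¹) l • christoffelFirst a x l := by
  ext i j
  simp only [covD, chr, jacobian, christoffelFirst, of_apply, Matrix.sub_apply, Matrix.sum_apply,
    Matrix.smul_apply, smul_eq_mul, vecMul, dotProduct, Finset.mul_sum, Finset.sum_mul]
  rw [Finset.sum_comm]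
  simp only [mul_assoc, mul_left_comm]

theorem of_covD_sub_transpose (ha : ∀ᶠ z in 𝓝 x, (a z).IsSymm) (v : (Fin n → ℝ) → Fin n → ℝ) :
    of (covD a v x) - (of (covD a v x))ᵀ = jacobian v x - (jacobian v x)ᵀ := by
  simp only [of_covD_eq, transpose_sub, transpose_sum, transpose_smul,
    (isSymm_christoffelFirst ha _).eq]
  abel

theorem dotProduct_of_covD_mulVec (a : (Fin n → ℝ) → Matrix (Fin n) (Fin n) ℝ)
    (v : (Fin n → ℝ) → Fin n → ℝ) (x y : Fin n → ℝ) :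
    y ⬝ᵥ of (covD a v x) *ᵥ y =
      y ⬝ᵥ jacobian v x *ᵥ y - (v x ᵥ* (a x)⁻¹) ⬝ᵥ christoffelForm a x y := by
  simp only [of_covD_eq, sub_mulVec, dotProduct_sub, sum_mulVec, smul_mulVec, dotProduct_sum,
    dotProduct_smul, smul_eq_mul]
  rfl

theorem eq_mul_sinh_and_eq_neg_mul_cosh {s X Y T : ℝ} (hpos : Real.exp s * (X + Y) + T = 0)
    (hneg : Real.exp (-s) * (X - Y) - T = 0) :
    X = T * Real.sinh s ∧ Y = -(T * Real.cosh s) := by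
  have hexp : Real.exp s * Real.exp (-s) = 1 := by
    rw [← Real.exp_add, add_neg_cancel, Real.exp_zero]
  rw [Real.sinh_eq, Real.cosh_eq]
  constructor
  · linear_combination (-(X + Y) / 2 - (X - Y) / 2) * hexp + Real.exp (-s) / 2 * hpos
      + Real.exp s / 2 * hneg
  · linear_combination (-(X + Y) / 2 + (X - Y) / 2) * hexp + Real.exp (-s) / 2 * hpos
      - Real.exp s / 2 * hneg

/-- The metric `α e^{β/α} + γ` at a single point, for `α² = M_{ij} y^i y^j`, `β = b_i y^i` and
`γ = c_i y^i`. -/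
def expMetric (M : Matrix (Fin n) (Fin n) ℝ) (b c y : Fin n → ℝ) : ℝ :=
  alph M y * Real.exp (oneForm b y / alph M y) + oneForm c y

/-- Projective flatness of `F` at the single point `x`: Hamel's equation in every direction
`y ≠ 0`. -/
def IsProjectivelyFlatAt (F : (Fin n → ℝ) → (Fin n → ℝ) → ℝ) (x : Fin n → ℝ) : Prop :=
  ∀ y, y ≠ 0 → ∀ j, hamel F x y j = 0

variable {b c : (Fin n → ℝ) → Fin n → ℝ}

theorem hamel_expMetric (haD : ∀ i j, DifferentiableAt ℝ (fun z ↦ a z i j) x)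
    (haP : ∀ᶠ z in 𝓝 x, (a z).PosDef) (hbD : ∀ i, DifferentiableAt ℝ (fun z ↦ b z i) x)
    (hcD : ∀ i, DifferentiableAt ℝ (fun z ↦ c z i) x) {y : Fin n → ℝ} (hy : y ≠ 0) (j : Fin n) :
    let α := alph (a x) y
    let s := b x ⬝ᵥ y / α
    hamel (fun z ↦ expMetric (a z) (b z) (c z)) x y j =
      Real.exp s *
        ((y ⬝ᵥ jacobian b x *ᵥ y - s * (y ⬝ᵥ christoffelForm a x y / α)) / α
            * (b x j - s * ((a x *ᵥ y) j / α))
          + (1 - s) * (geodesicDefect a x y j / α ^ 3)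
          + ((jacobian b x - (jacobian b x)ᵀ) *ᵥ y) j)
        + ((jacobian c x - (jacobian c x)ᵀ) *ᵥ y) j := by
  have hpx := haP.self_of_nhds
  have h := hamel_mul_exp_div_add (hamelDifferentiableAt_alph haD haP hy)
    (hamelDifferentiableAt_oneForm hbD y) (hamelDifferentiableAt_oneForm hcD y)
    (alph_pos hpx hy).ne' j
  rw [hamel_oneForm hbD, hamel_oneForm hcD, hamel_alph haD haP hy, fderiv_oneForm_left hbD,
    fderiv_alph_left haD hpx hy, pd_oneForm, pd_alph hpx hy, ← div_div,
    ← dotProduct_christoffelForm_self haD] at h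
  exact h

theorem christoffelForm_neg (a : (Fin n → ℝ) → Matrix (Fin n) (Fin n) ℝ) (x y : Fin n → ℝ) :
    christoffelForm a x (-y) = christoffelForm a x y := by
  ext l
  simp only [christoffelForm, mulVec_neg, neg_dotProduct_neg]

theorem geodesicDefect_neg (a : (Fin n → ℝ) → Matrix (Fin n) (Fin n) ℝ) (x y : Fin n → ℝ) :
    geodesicDefect a x (-y) = geodesicDefect a x y := by
  simp only [geodesicDefect, christoffelForm_neg, mulVec_neg, neg_dotProduct, dotProduct_neg,
    neg_neg, neg_smul, smul_neg]

theorem alph_neg (M : Matrix (Fin n) (Fin n) ℝ) (y : Fin n → ℝ) : alph M (-y) = alph M y := by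
  simp only [alph_eq_sqrt_dotProduct, mulVec_neg, neg_dotProduct_neg]

theorem even_odd_parts_of_isProjectivelyFlatAt (haD : ∀ i j, DifferentiableAt ℝ (fun z ↦ a z i j) x)
    (haP : ∀ᶠ z in 𝓝 x, (a z).PosDef) (hbD : ∀ i, DifferentiableAt ℝ (fun z ↦ b z i) x)
    (hcD : ∀ i, DifferentiableAt ℝ (fun z ↦ c z i) x)
    (hF : IsProjectivelyFlatAt (fun z ↦ expMetric (a z) (b z) (c z)) x)
    {y : Fin n → ℝ} (hy : y ≠ 0) (j : Fin n) :
    let A := y ⬝ᵥ a x *ᵥ y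
    let B := b x ⬝ᵥ y
    let T := ((jacobian c x - (jacobian c x)ᵀ) *ᵥ y) j
    (A * (y ⬝ᵥ jacobian b x *ᵥ y) - B * (y ⬝ᵥ christoffelForm a x y))
          * (A * b x j - B * (a x *ᵥ y) j) + A * geodesicDefect a x y j
        = T * (A ^ 2 * (√A * Real.sinh (B / √A))) ∧
      B * geodesicDefect a x y j - A ^ 2 * ((jacobian b x - (jacobian b x)ᵀ) *ᵥ y) j
        = T * (A ^ 2 * Real.cosh (B / √A)) := by
  intro A B T
  have hpos := hamel_expMetric haD haP hbD hcD hy j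
  have hneg := hamel_expMetric haD haP hbD hcD (neg_ne_zero.2 hy) j
  have hα := (alph_pos haP.self_of_nhds hy).ne'
  rw [hF y hy] at hpos
  rw [hF (-y) (neg_ne_zero.2 hy)] at hneg
  simp only [alph_neg, christoffelForm_neg, geodesicDefect_neg, mulVec_neg, dotProduct_neg,
    neg_dotProduct, neg_neg, Pi.neg_apply, neg_div] at hneg
  have hA : A = alph (a x) y ^ 2 := (alph_sq haP.self_of_nhds y).symm
  have hsqrt : √A = alph (a x) y := (alph_eq_sqrt_dotProduct _ _).symm
  obtain ⟨heven, hodd⟩ := eq_mul_sinh_and_eq_neg_mul_cosh (s := B / alph (a x) y) (T := T)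
    (X := (y ⬝ᵥ jacobian b x *ᵥ y
          - B / alph (a x) y * (y ⬝ᵥ christoffelForm a x y / alph (a x) y)) / alph (a x) y
        * (b x j - B / alph (a x) y * ((a x *ᵥ y) j / alph (a x) y))
      + geodesicDefect a x y j / alph (a x) y ^ 3)
    (Y := ((jacobian b x - (jacobian b x)ᵀ) *ᵥ y) j
      - B / alph (a x) y * (geodesicDefect a x y j / alph (a x) y ^ 3))
    (by linear_combination -hpos) (by linear_combination -hneg)
  rw [hsqrt, hA, mul_left_comm T, mul_left_comm T, mul_left_comm T, ← heven,
    ← neg_eq_iff_eq_neg.2 hodd]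
  constructor
  · field_simp
  · field_simp
    ring

theorem exists_mvPolynomial_eval_eq_geodesicDefect (a : (Fin n → ℝ) → Matrix (Fin n) (Fin n) ℝ)
    (x : Fin n → ℝ) (j : Fin n) :
    ∃ P : MvPolynomial (Fin n) ℝ, ∀ y, MvPolynomial.eval y P = geodesicDefect a x y j := by
  let N (l : Fin n) : MvPolynomial (Fin n) ℝ :=
    MvPolynomial.X ⬝ᵥ (christoffelFirst a x l).map MvPolynomial.C *ᵥ MvPolynomial.X
  have hN : ∀ y l, MvPolynomial.eval y (N l) = christoffelForm a x y l := fun y l ↦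
    eval_X_dotProduct_map_C_mulVec_X _ y
  have hyN : ∀ y, MvPolynomial.eval y (MvPolynomial.X ⬝ᵥ N) = y ⬝ᵥ christoffelForm a x y := by
    simp only [dotProduct, map_sum, map_mul, MvPolynomial.eval_X, hN, implies_true]
  refine ⟨MvPolynomial.X ⬝ᵥ (a x).map MvPolynomial.C *ᵥ MvPolynomial.X * N j
    - MvPolynomial.X ⬝ᵥ N * (MvPolynomial.C ∘ a x j) ⬝ᵥ MvPolynomial.X, fun y ↦ ?_⟩
  simp only [map_sub, map_mul, eval_X_dotProduct_map_C_mulVec_X, eval_C_comp_dotProduct_X, hN, hyN]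
  rfl

theorem jacobian_sub_transpose_eq_zero_of_isProjectivelyFlatAt [Nontrivial (Fin n)]
    (haD : ∀ i j, DifferentiableAt ℝ (fun z ↦ a z i j) x)
    (haP : ∀ᶠ z in 𝓝 x, (a z).PosDef) (hbD : ∀ i, DifferentiableAt ℝ (fun z ↦ b z i) x)
    (hcD : ∀ i, DifferentiableAt ℝ (fun z ↦ c z i) x) (hb : b x ≠ 0)
    (hF : IsProjectivelyFlatAt (fun z ↦ expMetric (a z) (b z) (c z)) x) :
    jacobian c x - (jacobian c x)ᵀ = 0 := by
  refine funext fun j ↦ ?_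
  obtain ⟨Ξ, hΞ⟩ := exists_mvPolynomial_eval_eq_geodesicDefect a x j
  refine eq_zero_of_dotProduct_mul_cosh_eq_eval (τ := (jacobian c x - (jacobian c x)ᵀ) j)
    haP.self_of_nhds hb ((MvPolynomial.C ∘ b x) ⬝ᵥ MvPolynomial.X * Ξ
      - (MvPolynomial.X ⬝ᵥ (a x).map MvPolynomial.C *ᵥ MvPolynomial.X) ^ 2
        * (MvPolynomial.C ∘ (jacobian b x - (jacobian b x)ᵀ) j) ⬝ᵥ MvPolynomial.X) fun y hy ↦ ?_
  simp only [map_sub, map_mul, map_pow, eval_X_dotProduct_map_C_mulVec_X,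
    eval_C_comp_dotProduct_X, hΞ]
  exact (even_odd_parts_of_isProjectivelyFlatAt haD haP hbD hcD hF hy j).2.symm

theorem dotProduct_geodesicDefect_of_mulVec_eq (ha : (a x).IsSymm) {u w : Fin n → ℝ}
    (hu : a x *ᵥ u = w) (y : Fin n → ℝ) :
    u ⬝ᵥ geodesicDefect a x y
      = (y ⬝ᵥ a x *ᵥ y) * (u ⬝ᵥ christoffelForm a x y) - w ⬝ᵥ y * (y ⬝ᵥ christoffelForm a x y) := by
  rw [geodesicDefect, dotProduct_sub, dotProduct_smul, dotProduct_smul,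
    dotProduct_mulVec_comm_of_isSymm ha u, hu, dotProduct_comm y w, smul_eq_mul, smul_eq_mul,
    mul_comm (w ⬝ᵥ y)]

theorem of_covD_eq_zero_of_isProjectivelyFlatAt [Nontrivial (Fin n)]
    (haD : ∀ i j, DifferentiableAt ℝ (fun z ↦ a z i j) x)
    (haP : ∀ᶠ z in 𝓝 x, (a z).PosDef) (hbD : ∀ i, DifferentiableAt ℝ (fun z ↦ b z i) x)
    (hcD : ∀ i, DifferentiableAt ℝ (fun z ↦ c z i) x) (hb : b x ≠ 0)
    (hF : IsProjectivelyFlatAt (fun z ↦ expMetric (a z) (b z) (c z)) x) :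
    of (covD a b x) = 0 := by
  have hpx := haP.self_of_nhds
  have hclosed := jacobian_sub_transpose_eq_zero_of_isProjectivelyFlatAt haD haP hbD hcD hb hF
  have hu : a x *ᵥ (b x ᵥ* (a x)⁻¹) = b x := by
    rw [← vecMul_transpose, isSymm_of_posDef hpx, vecMul_vecMul,
      nonsing_inv_mul _ ((isUnit_iff_isUnit_det _).1 hpx.isUnit), vecMul_one]
  refine eq_zero_of_smul_add_sq_smul_skew_eq_zero hpx hb hu fun y hy ↦ ?_
  have heqs := even_odd_parts_of_isProjectivelyFlatAt haD haP hbD hcD hF hy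
  simp only [hclosed, zero_mulVec, Pi.zero_apply, zero_mul] at heqs
  refine smul_add_sq_smul_eq_zero_of_smul_eq (dotProduct_mulVec_self_pos hpx hy).ne'
    (ξ := geodesicDefect a x y) ?_ ?_
  · rw [dotProduct_of_covD_mulVec, dotProduct_geodesicDefect_of_mulVec_eq (isSymm_of_posDef hpx) hu]
    ext j
    simp only [Pi.add_apply, Pi.sub_apply, Pi.smul_apply, smul_eq_mul, Pi.zero_apply]
    linear_combination (heqs j).1
  · rw [of_covD_sub_transpose (haP.mono fun _ ↦ isSymm_of_posDef)]
    exact funext fun j ↦ sub_eq_zero.1 (heqs j).2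
end

section
open Filter Topology

theorem statement17_general {n : ℕ} (hn : 2 ≤ n) {x : Fin n → ℝ}
    {a : (Fin n → ℝ) → Matrix (Fin n) (Fin n) ℝ} {b c : (Fin n → ℝ) → Fin n → ℝ}
    (haD : ∀ i j, DifferentiableAt ℝ (fun z ↦ a z i j) x) (haP : ∀ᶠ z in 𝓝 x, (a z).PosDef)
    (hbD : ∀ i, DifferentiableAt ℝ (fun z ↦ b z i) x)
    (hcD : ∀ i, DifferentiableAt ℝ (fun z ↦ c z i) x) (hb : b x ≠ 0)
    (hF : IsProjectivelyFlatAt (fun z ↦ expMetric (a z) (b z) (c z)) x) (i j : Fin n) :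
    covD a b x i j = 0 ∧ sSym a c x i j = 0 := by
  have : Nontrivial (Fin n) := Fin.nontrivial_iff_two_le.2 hn
  have hparallel := of_covD_eq_zero_of_isProjectivelyFlatAt haD haP hbD hcD hb hF
  have hclosed := jacobian_sub_transpose_eq_zero_of_isProjectivelyFlatAt haD haP hbD hcD hb hF
  rw [← of_covD_sub_transpose (haP.mono fun _ ↦ isSymm_of_posDef)] at hclosed
  exact ⟨congrFun₂ hparallel i j, mul_eq_zero_of_right _ (congrFun₂ hclosed i j)⟩
end

/-- if `F = α e^{β/α} + γ` is projectively flat then `β` is parallel and `γ` is closed. -/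
theorem statement17
    (n : ℕ) (hn : 2 ≤ n)
    (U : Set (Fin n → ℝ)) (hU : IsOpen U)
    (a : (Fin n → ℝ) → Matrix (Fin n) (Fin n) ℝ)
    (haS : ∀ i j, ContDiffOn ℝ (⊤ : ℕ∞) (fun x => a x i j) U)
    (haP : ∀ x ∈ U, (a x).PosDef)
    (bv gv : (Fin n → ℝ) → Fin n → ℝ)
    (hbS : ∀ i, ContDiffOn ℝ (⊤ : ℕ∞) (fun x => bv x i) U)
    (hgS : ∀ i, ContDiffOn ℝ (⊤ : ℕ∞) (fun x => gv x i) U)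
    (hb1 : ∀ x ∈ U, Real.sqrt (quadInv (a x) (bv x) (bv x)) < 1)
    (hg1 : ∀ x ∈ U, Real.sqrt (quadInv (a x) (gv x) (gv x)) < Real.exp (-1))
    (hbne : ∀ x ∈ U, bv x ≠ 0)
    (hpf : ∀ x ∈ U, ∀ y : Fin n → ℝ, y ≠ 0 → ∀ j : Fin n,
      (∑ k, pd (fun z =>
          pd (fun w => alph (a z) w * Real.exp (oneForm (bv z) w / alph (a z) w)
            + oneForm (gv z) w) y j) x k * y k)
        - pd (fun z => alph (a z) y * Real.exp (oneForm (bv z) y / alph (a z) y)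
            + oneForm (gv z) y) x j = 0) :
    ∀ x ∈ U, ∀ i j : Fin n, covD a bv x i j = 0 ∧ sSym a gv x i j = 0 := by
  intro x hx
  have hUx := hU.mem_nhds hx
  exact statement17_general hn
    (fun i j ↦ ((haS i j).contDiffAt hUx).differentiableAt (by simp))
    (Filter.eventually_of_mem hUx haP)
    (fun i ↦ ((hbS i).contDiffAt hUx).differentiableAt (by simp))
    (fun i ↦ ((hgS i).contDiffAt hUx).differentiableAt (by simp)) (hbne x hx) (hpf x hx)
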